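/- Lemma 6.4, final claim (the full consecutive composition is the cyclic shift up to frozen variables): Let k ≥ 2, r ≥ 2, n = rk. For every index j ∈ ZMod n there exist a sign ε_j ∈ {+1, −1} and a Laurent monomial M_j in the frozen minors (both independent of v) such that for every generic configuration v : ZMod n → (Fin k → ℂ), the j-th vector of (σ_{k−1} ∘ σ_{k−2} ∘ ⋯ ∘ σ_1)(v) equals ε_j · M_j(v) · v_{j+1}. In other words, the composition σ_{k−1} ∘ ⋯ ∘ σ_1 agrees componentwise, up to signs and Laurent monomials in the frozen minors, with the cyclic shift v ↦ (v_{j+1})_j. -/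

import Mathlib

open scoped BigOperators

noncomputable section

/-- Determinant of the `k × k` matrix whose `b`-th column is `c b`. -/
def colDet {k : ℕ} (c : Fin k → Fin k → ℂ) : ℂ :=
  Matrix.det (Matrix.of fun a b => c b a)

/-- The frozen Plücker minor `Δ_m(v)`, on the `k` cyclically consecutive
columns starting at `m`. -/
def frozen (k n : ℕ) (v : ZMod n → Fin k → ℂ) (m : ZMod n) : ℂ :=
  colDet (fun b : Fin k => v (m + ((b : ℕ) : ZMod n)))

/-- A configuration is generic if all frozen minors are nonzero. -/
def Generic (k n : ℕ) (v : ZMod n → Fin k → ℂ) : Prop :=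
  ∀ m : ZMod n, frozen k n v m ≠ 0

/-- The Laurent monomial `∏_m Δ_m(v)^(e m)` in the frozen minors. -/
def laurent (k n : ℕ) (e : Fin n → ℤ) (v : ZMod n → Fin k → ℂ) : ℂ :=
  ∏ m : Fin n, frozen k n v ((m : ℕ) : ZMod n) ^ e m

/-- The Artin generator `σ_i` acting on configurations. -/
def artin (k n i : ℕ) (v : ZMod n → Fin k → ℂ) : ZMod n → Fin k → ℂ :=
  fun j =>
    if (ZMod.val j) % k = i % k then v (j + 1)
    else if (ZMod.val j) % k = (i + 1) % k then
      (colDet (fun b : Fin k =>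
          if (b : ℕ) = 0 then v (j - 1) else v (j + ((b : ℕ) : ZMod n)))) • v j
        - (frozen k n v j) • v (j - 1)
    else v j

/-- `artinComp k n i v = σ_i (σ_{i-1} (⋯ (σ_1 v)))`. -/
def artinComp (k n : ℕ) : ℕ → (ZMod n → Fin k → ℂ) → ZMod n → Fin k → ℂ
  | 0, v => v
  | m + 1, v => artin k n (m + 1) (artinComp k n m v)

/-- `artinCompRev k n i v = σ_1 (σ_2 (⋯ (σ_i v)))`. -/
def artinCompRev (k n : ℕ) : ℕ → (ZMod n → Fin k → ℂ) → ZMod n → Fin k → ℂ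
  | 0, v => v
  | m + 1, v => artinCompRev k n m (artin k n (m + 1) v)

/-- The degree-one Grassmann–Cayley meet
`(a_1 ⋯ a_p) ∩ (b_1 ⋯ b_q)` (intended for `p + q = k + 1`):
`Σ_{i=1}^{p} (−1)^{p−i} · det(a_1 | ⋯ | â_i | ⋯ | a_p | b_1 | ⋯ | b_q) · a_i`. -/
def gcMeet {k p q : ℕ} (a : Fin p → Fin k → ℂ) (b : Fin q → Fin k → ℂ) : Fin k → ℂ :=
  ∑ i : Fin p, ((-1 : ℂ) ^ (p - 1 - (i : ℕ)) *
    colDet (fun c : Fin k =>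
      if hc : (c : ℕ) < p - 1 then
        (if hci : (c : ℕ) < (i : ℕ) then a ⟨(c : ℕ), Nat.lt_trans hci i.isLt⟩
         else a ⟨(c : ℕ) + 1, by have := i.isLt; omega⟩)
      else if hq : (c : ℕ) - (p - 1) < q then b ⟨(c : ℕ) - (p - 1), hq⟩ else 0)) • a i



lemma colDet_eq {k : ℕ} (c : Fin k → Fin k → ℂ) :
    colDet c = (Matrix.detRowAlternating (n := Fin k) (R := ℂ)) c := by
  unfold colDet
  rw [← Matrix.det_transpose]
  rfl

/-- determinant as a linear function of column `i`. -/
def colLin {k : ℕ} (g : Fin k → Fin k → ℂ) (i : Fin k) : (Fin k → ℂ) →ₗ[ℂ] ℂ :=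
  (Matrix.detRowAlternating (n := Fin k) (R := ℂ)).toMultilinearMap.toLinearMap g i

lemma colLin_apply {k : ℕ} (g : Fin k → Fin k → ℂ) (i : Fin k) (x : Fin k → ℂ) :
    colLin g i x = colDet (Function.update g i x) := by
  rw [colDet_eq]; rfl

lemma colLin_zero {k : ℕ} (g : Fin k → Fin k → ℂ) (i j : Fin k) (h : i ≠ j) :
    colLin g i (g j) = 0 := by
  rw [colLin_apply, colDet_eq]
  apply AlternatingMap.map_eq_zero_of_eq _ _ _ h
  simp [Function.update_of_ne h.symm]

/-- the cycle permutation of the last entries. -/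
def tauFun (k t : ℕ) (ht : t < k) (b : Fin k) : Fin k :=
  if h1 : (b : ℕ) < t then b
  else if h2 : (b : ℕ) + 1 < k then ⟨b + 1, h2⟩ else ⟨t, ht⟩

lemma tauFun_inj (k t : ℕ) (ht : t < k) : Function.Injective (tauFun k t ht) := by
  intro a b hab
  have ha := a.2
  have hb := b.2
  unfold tauFun at hab
  ext
  split_ifs at hab <;> simp only [Fin.ext_iff] at hab <;> omega

def tau (k t : ℕ) (ht : t < k) : Equiv.Perm (Fin k) :=
  Equiv.ofBijective _ (Finite.injective_iff_bijective.mp (tauFun_inj k t ht))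

def sg (k t : ℕ) : ℂ :=
  if ht : t < k then ((Equiv.Perm.sign (tau k t ht) : ℤ) : ℂ) else 1

lemma sg_or (k t : ℕ) : sg k t = 1 ∨ sg k t = -1 := by
  unfold sg
  split_ifs with h
  · rcases Int.units_eq_one_or (Equiv.Perm.sign (tau k t h)) with h | h <;> simp [h]
  · simp

lemma colDet_tau {k t : ℕ} (ht : t < k) (c : Fin k → Fin k → ℂ) :
    colDet (fun b => c (tauFun k t ht b)) = sg k t * colDet c := by
  have := (Matrix.detRowAlternating (n := Fin k) (R := ℂ)).map_perm c (tau k t ht)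
  rw [colDet_eq, colDet_eq]
  refine (Eq.trans ?_ this).trans ?_
  · rfl
  · simp [sg, ht, Units.smul_def]

/-- functions that are a sign times a Laurent monomial on generic configurations -/
def IsMono (k n : ℕ) (f : (ZMod n → Fin k → ℂ) → ℂ) : Prop :=
  ∃ (ε : ℂ) (e : Fin n → ℤ), (ε = 1 ∨ ε = -1) ∧
    ∀ v, Generic k n v → f v = ε * laurent k n e v

lemma IsMono.mul {k n : ℕ} {f g : (ZMod n → Fin k → ℂ) → ℂ}
    (hf : IsMono k n f) (hg : IsMono k n g) : IsMono k n (fun v => f v * g v) := by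
  obtain ⟨ε, e, hε, h⟩ := hf
  obtain ⟨ε', e', hε', h'⟩ := hg
  refine ⟨ε * ε', fun m => e m + e' m, ?_, ?_⟩
  · rcases hε with rfl | rfl <;> rcases hε' with rfl | rfl <;> simp
  · intro v hv
    have : laurent k n (fun m => e m + e' m) v = laurent k n e v * laurent k n e' v := by
      unfold laurent
      rw [← Finset.prod_mul_distrib]
      exact Finset.prod_congr rfl fun m _ => zpow_add₀ (hv _) _ _
    simp only [h v hv, h' v hv, this]
    ring

lemma IsMono.inv {k n : ℕ} {f : (ZMod n → Fin k → ℂ) → ℂ}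
    (hf : IsMono k n f) : IsMono k n (fun v => (f v)⁻¹) := by
  obtain ⟨ε, e, hε, h⟩ := hf
  refine ⟨ε, fun m => - e m, hε, ?_⟩
  intro v hv
  have : laurent k n (fun m => - e m) v = (laurent k n e v)⁻¹ := by
    unfold laurent
    rw [← Finset.prod_inv_distrib]
    exact Finset.prod_congr rfl fun m _ => zpow_neg _ _
  simp only [h v hv, this, mul_inv]
  rcases hε with rfl | rfl <;> norm_num

lemma IsMono.sign {k n : ℕ} (ε : ℂ) (h : ε = 1 ∨ ε = -1) : IsMono k n (fun _ => ε) :=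
  ⟨ε, fun _ => 0, h, fun v _ => by simp [laurent]⟩

lemma IsMono.frozen {k n : ℕ} [NeZero n] (m : ZMod n) : IsMono k n (fun v => frozen k n v m) := by
  refine ⟨1, fun i => if i = ⟨m.val, ZMod.val_lt m⟩ then 1 else 0, Or.inl rfl, ?_⟩
  intro v hv
  unfold laurent
  rw [Finset.prod_eq_single (⟨m.val, ZMod.val_lt m⟩ : Fin n)]
  · simp
  · intro b _ hb
    simp [hb]
  · simp

/-- the first coefficient -/
def c0 (k n : ℕ) (v : ZMod n → Fin k → ℂ) (s : ZMod n) : ℂ :=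
  sg k 0 * frozen k n v (s + 1) * (frozen k n v s)⁻¹

def lam (k n : ℕ) (v : ZMod n → Fin k → ℂ) : ℕ → ZMod n → ℂ
  | 0, s => (c0 k n v s)⁻¹
  | m + 1, s => (-1) * lam k n v m s * lam k n v m (s + (k : ZMod n)) *
      c0 k n v (s + (k : ZMod n)) * sg k (k - 1 - m) * frozen k n v (s + ((m + 1 : ℕ) : ZMod n))

lemma c0_mono {k n : ℕ} [NeZero n] (s : ZMod n) : IsMono k n (fun v => c0 k n v s) :=
  ((IsMono.sign _ (sg_or k 0)).mul (IsMono.frozen _)).mul (IsMono.frozen _).inv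

lemma lam_mono {k n : ℕ} [NeZero n] (m : ℕ) :
    ∀ s : ZMod n, IsMono k n (fun v => lam k n v m s) := by
  induction m with
  | zero => exact fun s => (c0_mono s).inv
  | succ m ih =>
    intro s
    exact (((((IsMono.sign (-1) (Or.inr rfl)).mul (ih s)).mul (ih _)).mul (c0_mono _)).mul
      (IsMono.sign _ (sg_or _ _))).mul (IsMono.frozen _)

lemma exists_coeff {k n : ℕ} (hk : 2 ≤ k) (v : ZMod n → Fin k → ℂ) (hv : Generic k n v)
    (s : ZMod n) : ∃ c : ℕ → ℂ,
      ∑ i ∈ Finset.range k, c i • v (s + (i : ZMod n)) = v (s + (k : ZMod n)) ∧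
      c 0 = c0 k n v s := by
  have hs := hv s
  obtain ⟨x, hx⟩ : ∃ x : Fin k → ℂ,
      ∑ i : Fin k, x i • v (s + ((i : ℕ) : ZMod n)) = v (s + (k : ZMod n)) := by
    set A : Matrix (Fin k) (Fin k) ℂ := Matrix.of fun a b => v (s + ((b : ℕ) : ZMod n)) a with hA
    have hdet : A.det ≠ 0 := hs
    refine ⟨A.det⁻¹ • A.cramer (v (s + (k : ZMod n))), ?_⟩
    have h1 : A.mulVec (A.det⁻¹ • A.cramer (v (s + (k : ZMod n)))) = v (s + (k : ZMod n)) := by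
      rw [Matrix.mulVec_smul, Matrix.mulVec_cramer, smul_smul, inv_mul_cancel₀ hdet, one_smul]
    rw [← h1]
    ext a
    rw [h1]
    conv_rhs => rw [← h1]
    simp [Matrix.mulVec, dotProduct, hA, Finset.sum_apply, mul_comm]
  refine ⟨fun i => if h : i < k then x ⟨i, h⟩ else 0, ?_, ?_⟩
  · rw [← hx, Finset.sum_range]
    simp
  · have h0 : 0 < k := by omega
    have hfz : frozen k n v s ≠ 0 := hs
    set g : Fin k → Fin k → ℂ := fun b => v (s + ((b : ℕ) : ZMod n)) with hg
    have key := congrArg (colLin g ⟨0, h0⟩) hx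
    rw [map_sum, Finset.sum_eq_single (⟨0, h0⟩ : Fin k)] at key
    · rw [map_smul, colLin_apply, colLin_apply] at key
      have e1 : Function.update g ⟨0, h0⟩ (v (s + (((⟨0, h0⟩ : Fin k) : ℕ) : ZMod n))) = g :=
        Function.update_eq_self _ g
      rw [e1] at key
      have e2 := colDet_tau h0 (Function.update g ⟨0, h0⟩ (v (s + (k : ZMod n))))
      have e3 : colDet (fun b => Function.update g ⟨0, h0⟩ (v (s + (k : ZMod n)))
          (tauFun k 0 h0 b)) = frozen k n v (s + 1) := by
        unfold frozen
        congr 1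
        funext b
        have hb := b.2
        unfold tauFun
        by_cases h2 : (b : ℕ) + 1 < k
        · simp only [Nat.not_lt_zero, dif_neg, not_false_eq_true, h2, dif_pos]
          rw [Function.update_of_ne (by simp [Fin.ext_iff])]
          simp only [hg]
          congr 1
          push_cast
          ring
        · simp only [Nat.not_lt_zero, dif_neg, not_false_eq_true, h2]
          rw [Function.update_self]
          have : k = b + 1 := by omega
          congr 1
          conv_lhs => rw [this]
          push_cast
          ring
      rw [e3] at e2
      simp only [h0, dif_pos]
      unfold c0
      rw [e2, eq_mul_inv_iff_mul_eq₀ hfz, ← mul_assoc]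
      have hsq : sg k 0 * sg k 0 = 1 := by
        rcases sg_or k 0 with h | h <;> rw [h] <;> norm_num
      rw [hsq, one_mul, ← key]
      rfl
    · intro i _ hi
      rw [map_smul]
      have := colLin_zero g ⟨0, h0⟩ i (Ne.symm hi)
      simp only [hg] at this ⊢
      rw [this, smul_zero]
    · simp

lemma res_add {k n : ℕ} (hkn : k ∣ n) [NeZero n] (s : ZMod n) (i : ℕ) :
    (s + (i : ZMod n)).val % k = (s.val + i) % k := by
  rw [ZMod.val_add, Nat.mod_mod_of_dvd _ hkn, ZMod.val_natCast, Nat.add_mod,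
    Nat.mod_mod_of_dvd _ hkn, ← Nat.add_mod]

lemma res_add' {k n : ℕ} (hk : 2 ≤ k) (hkn : k ∣ n) [NeZero n] (s : ZMod n) (hs : s.val % k = 1)
    (i m : ℕ) (hi : i < k) (hm : m < k) :
    (s + (i : ZMod n)).val % k = (m + 1) % k ↔ i = m := by
  rw [res_add hkn, Nat.add_mod, hs]
  constructor
  · intro h
    rw [Nat.mod_eq_of_lt hi, add_comm 1 i] at h
    have := Nat.ModEq.add_right_cancel' 1 (show i + 1 ≡ m + 1 [MOD k] from h)
    exact this.eq_of_lt_of_lt hi hm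
  · rintro rfl
    rw [Nat.mod_eq_of_lt hi, add_comm]

lemma invariant {k n : ℕ} (hk : 2 ≤ k) (hkn : k ∣ n) [NeZero n] (v : ZMod n → Fin k → ℂ)
    (hv : Generic k n v) (c : ZMod n → ℕ → ℂ)
    (hc : ∀ s, ∑ i ∈ Finset.range k, c s i • v (s + (i : ZMod n)) = v (s + (k : ZMod n)))
    (hc0 : ∀ s, c s 0 = c0 k n v s) (m : ℕ) (hm : m < k) :
    ∀ s : ZMod n, s.val % k = 1 → ∀ i < k,
      artinComp k n m v (s + (i : ZMod n)) =
        if i < m then v (s + ((i + 1 : ℕ) : ZMod n))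
        else if i = m then
          lam k n v m s • ∑ l ∈ Finset.range (m + 1), c s l • v (s + (l : ZMod n))
        else v (s + (i : ZMod n)) := by
  induction m with
  | zero =>
    intro s hs i hi
    by_cases h : i = 0
    · subst h
      have : c0 k n v s ≠ 0 := by
        unfold c0
        refine mul_ne_zero (mul_ne_zero ?_ (hv _)) (inv_ne_zero (hv _))
        rcases sg_or k 0 with h | h <;> rw [h] <;> norm_num
      simp [artinComp, lam, hc0, smul_smul, this]
    · simp [artinComp, h]
  | succ m ih =>
    have ih := ih (by omega)
    intro s hs i hi
    set W := artinComp k n m v with hW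
    change artin k n (m + 1) W _ = _
    unfold artin
    simp only [res_add' hk hkn s hs i m hi (by omega), res_add' hk hkn s hs i (m + 1) hi (by omega)]
    by_cases h1 : i = m
    · subst h1
      have : s + (i : ZMod n) + 1 = s + ((i + 1 : ℕ) : ZMod n) := by push_cast; ring
      rw [if_pos rfl, this, ih s hs (i + 1) hm]
      simp
    rw [if_neg h1]
    by_cases h2 : i = m + 1
    swap
    · rw [if_neg h2, ih s hs i hi]
      by_cases h3 : i < m
      · rw [if_pos h3, if_pos (by omega)]
      · rw [if_neg h3, if_neg h1, if_neg (by omega), if_neg h2]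
    subst h2
    rw [if_pos rfl, if_neg (lt_irrefl _), if_pos rfl]
    set j : ZMod n := s + ((m + 1 : ℕ) : ZMod n) with hj
    have hj1 : j - 1 = s + (m : ZMod n) := by rw [hj]; push_cast; ring
    have hWj1 : W (j - 1) = lam k n v m s •
        ∑ l ∈ Finset.range (m + 1), c s l • v (s + (l : ZMod n)) := by
      rw [hj1, ih s hs m (by omega)]; simp
    have hWj : W j = v j := by
      rw [hj, ih s hs (m + 1) (by omega)]; simp
    have h0 : 0 < k := by omega
    have ht : k - 1 - m < k := by omega
    have hlast : k - 1 < k := by omega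
    set s' := s + (k : ZMod n) with hs'
    have hs'1 : s'.val % k = 1 := by
      rw [hs', res_add hkn, Nat.add_mod_right, hs]
    set g : Fin k → Fin k → ℂ := fun b => v (j + ((b : ℕ) : ZMod n)) with hg
    -- columns of the moved configuration
    have hcol : ∀ x : Fin k → ℂ,
        colDet (fun b : Fin k => if (b : ℕ) = 0 then x else W (j + ((b : ℕ) : ZMod n))) =
          lam k n v m s' * c0 k n v s' * sg k (k - 1 - m) * colLin g ⟨0, h0⟩ x := by
      intro x
      set G : Fin k → Fin k → ℂ := fun b => Function.update g ⟨0, h0⟩ x (tauFun k (k - 1 - m) ht b)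
        with hG
      have e1 : (fun b : Fin k => if (b : ℕ) = 0 then x else W (j + ((b : ℕ) : ZMod n))) =
          Function.update G ⟨k - 1, hlast⟩ (lam k n v m s' •
            ∑ l ∈ Finset.range (m + 1), c s' l • v (s' + (l : ZMod n))) := by
        funext b
        have hb := b.2
        by_cases hbl : b = ⟨k - 1, hlast⟩
        · subst hbl
          rw [Function.update_self, if_neg (by simp; omega)]
          have : j + (((⟨k - 1, hlast⟩ : Fin k) : ℕ) : ZMod n) = s' + (m : ZMod n) := by
            simp only [hj, hs']
            rw [add_assoc, add_assoc, ← Nat.cast_add, ← Nat.cast_add]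
            congr 2
            omega
          rw [this, ih s' hs'1 m (by omega)]
          simp
        · rw [Function.update_of_ne hbl]
          have hbl' : (b : ℕ) ≠ k - 1 := fun h => hbl (Fin.ext h)
          simp only [hG, tauFun]
          by_cases hb0 : (b : ℕ) = 0
          · have hbe : b = ⟨0, h0⟩ := Fin.ext hb0
            rw [if_pos hb0, dif_pos (by omega), hbe, Function.update_self]
          · rw [if_neg hb0]
            by_cases hbt : (b : ℕ) < k - 1 - m
            · rw [dif_pos hbt, Function.update_of_ne (by simpa [Fin.ext_iff] using hb0)]
              simp only [hg, hj]
              rw [add_assoc, ← Nat.cast_add, ih s hs _ (by omega), if_neg (by omega),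
                if_neg (by omega)]
            · rw [dif_neg hbt, dif_pos (by omega), Function.update_of_ne (by simp [Fin.ext_iff])]
              simp only [hg, hj]
              have : s + ((m + 1 : ℕ) : ZMod n) + ((b : ℕ) : ZMod n) =
                  s' + ((m + 1 + b - k : ℕ) : ZMod n) := by
                simp only [hs']
                rw [add_assoc, add_assoc, ← Nat.cast_add, ← Nat.cast_add]
                congr 2
                omega
              rw [this, ih s' hs'1 _ (by omega), if_pos (by omega)]
              congr 1
              simp only [hs']
              rw [add_assoc s, add_assoc s, ← Nat.cast_add, ← Nat.cast_add]
              congr 2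
              omega
      rw [e1, ← colLin_apply, map_smul, map_sum, Finset.sum_eq_single 0]
      · have e2 : v (s' + ((0 : ℕ) : ZMod n)) = G ⟨k - 1, hlast⟩ := by
          simp only [hG, tauFun]
          rw [dif_neg (by omega), dif_neg (by omega),
            Function.update_of_ne (by simp [Fin.ext_iff]; omega)]
          simp only [hg, hs', hj]
          congr 1
          rw [add_assoc, add_assoc, ← Nat.cast_add, ← Nat.cast_add]
          congr 2
          omega
        rw [map_smul, e2, colLin_apply, Function.update_eq_self, hG, colDet_tau, hc0, colLin_apply]
        simp only [smul_eq_mul]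
        ring
      · intro l hl hl0
        have hl' : l < m + 1 := Finset.mem_range.mp hl
        have hlt : k - 2 - m + l < k := by omega
        have e2 : v (s' + (l : ZMod n)) = G ⟨k - 2 - m + l, hlt⟩ := by
          simp only [hG, tauFun]
          rw [dif_neg (by omega), dif_pos (by omega),
            Function.update_of_ne (by simp [Fin.ext_iff])]
          simp only [hg, hs', hj]
          congr 1
          rw [add_assoc, add_assoc, ← Nat.cast_add, ← Nat.cast_add]
          congr 2
          omega
        rw [map_smul, e2, colLin_zero _ _ _ (by simp [Fin.ext_iff]; omega), smul_zero]
      · simp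
    -- second determinant
    have hfro : frozen k n W j =
        lam k n v m s' * c0 k n v s' * sg k (k - 1 - m) * frozen k n v j := by
      have e1 : frozen k n W j =
          colDet (fun b : Fin k => if (b : ℕ) = 0 then v j else W (j + ((b : ℕ) : ZMod n))) := by
        unfold frozen
        congr 1
        funext b
        by_cases hb : (b : ℕ) = 0
        · rw [if_pos hb, hb, Nat.cast_zero, add_zero, hWj]
        · rw [if_neg hb]
      have e2 : v j = g ⟨0, h0⟩ := by simp [hg]
      rw [e1, hcol, e2, colLin_apply, Function.update_eq_self]
      rfl
    -- vanishing
    have hvan : colLin g ⟨0, h0⟩ (∑ l ∈ Finset.range (m + 2), c s l • v (s + (l : ZMod n))) = 0 := by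
      have hsplit := Finset.sum_range_add_sum_Ico
        (fun l => c s l • v (s + (l : ZMod n))) (show m + 2 ≤ k by omega)
      rw [hc s] at hsplit
      have hz : ∀ l, m + 2 ≤ l → l ≤ k → colLin g ⟨0, h0⟩ (v (s + (l : ZMod n))) = 0 := by
        intro l hl1 hl2
        have hlt : l - (m + 1) < k := by omega
        have e2 : v (s + (l : ZMod n)) = g ⟨l - (m + 1), hlt⟩ := by
          simp only [hg, hj]
          congr 1
          rw [add_assoc, ← Nat.cast_add]
          congr 2
          omega
        rw [e2, colLin_zero _ _ _ (by simp [Fin.ext_iff]; omega)]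
      have h3 := congrArg (colLin g ⟨0, h0⟩) hsplit
      rw [map_add, hz k (by omega) le_rfl, map_sum (colLin g ⟨0, h0⟩) _ (Finset.Ico _ _),
        Finset.sum_eq_zero (s := Finset.Ico _ _), add_zero] at h3
      · exact h3
      · intro l hl
        rw [Finset.mem_Ico] at hl
        rw [map_smul, hz l hl.1 hl.2.le, smul_zero]
    have hgj : colLin g ⟨0, h0⟩ (v j) = frozen k n v j := by
      have e2 : v j = g ⟨0, h0⟩ := by simp [hg]
      rw [e2, colLin_apply, Function.update_eq_self]
      rfl
    rw [hcol, hfro, hWj1, hWj, Finset.sum_range_succ _ (m + 1)]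
    rw [Finset.sum_range_succ _ (m + 1), map_add, map_smul, ← hj, hgj] at hvan
    rw [map_smul, eq_neg_of_add_eq_zero_left hvan, ← hj]
    simp only [lam, ← hs', ← hj, smul_eq_mul]
    module

/-- Lemma 6.4, final claim: the composition `σ_{k−1} ∘ ⋯ ∘ σ_1` agrees
componentwise with the cyclic shift `v ↦ (v_{j+1})_j`, up to signs and Laurent
monomials in the frozen minors. -/
theorem full_consecutive_composition_is_cyclic_shift
    (k r n : ℕ) (hk : 2 ≤ k) (hr : 2 ≤ r) (hn : n = r * k) (j : ZMod n) :
    ∃ (ε : ℂ) (e : Fin n → ℤ), (ε = 1 ∨ ε = -1) ∧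
      ∀ v : ZMod n → Fin k → ℂ, Generic k n v →
        artinComp k n (k - 1) v j = (ε * laurent k n e v) • v (j + 1) := by
  have hkn : k ∣ n := ⟨r, by rw [hn, mul_comm]⟩
  haveI : NeZero n := ⟨by subst hn; exact Nat.mul_ne_zero (by omega) (by omega)⟩
  -- locate `j` in its block
  obtain ⟨s, i, hs, hi, rfl⟩ : ∃ (s : ZMod n) (i : ℕ), s.val % k = 1 ∧ i < k ∧
      j = s + (i : ZMod n) := by
    have hq : (j.val + (k - 1)) % k < k := Nat.mod_lt _ (by omega)
    refine ⟨j + ((k - (j.val + (k - 1)) % k : ℕ) : ZMod n) + ((n - k : ℕ) : ZMod n),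
      (j.val + (k - 1)) % k, ?_, hq, ?_⟩
    · rw [res_add hkn, Nat.add_mod, res_add hkn, ← Nat.add_mod]
      obtain ⟨d, hd⟩ : k ∣ n - k := Nat.dvd_sub hkn dvd_rfl
      rw [hd, Nat.add_mul_mod_self_left]
      have h1 := Nat.div_add_mod (j.val + (k - 1)) k
      set q := (j.val + (k - 1)) / k
      have h2 : j.val + (k - (j.val + (k - 1)) % k) = 1 + k * q := by omega
      rw [h2, Nat.add_mul_mod_self_left, Nat.mod_eq_of_lt (by omega)]
    · have hkl : k ≤ n := Nat.le_of_dvd (Nat.pos_of_ne_zero (NeZero.ne n)) hkn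
      rw [add_assoc, add_assoc, ← Nat.cast_add, ← Nat.cast_add]
      have : k - (j.val + (k - 1)) % k + (n - k + (j.val + (k - 1)) % k) = n := by omega
      rw [this, ZMod.natCast_self, add_zero]
  by_cases hik : i = k - 1
  · obtain ⟨ε, e, hε, h⟩ := lam_mono (k := k) (k - 1) s
    refine ⟨ε, e, hε, fun v hv => ?_⟩
    choose c hc hc0 using fun s => exists_coeff hk v hv s
    rw [invariant hk hkn v hv c hc hc0 (k - 1) (by omega) s hs i hi, ← h v hv,
      if_neg (by omega), if_pos hik, show k - 1 + 1 = k by omega, hc s]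
    congr 2
    rw [add_assoc, ← Nat.cast_succ]
    congr 2
    omega
  · refine ⟨1, fun _ => 0, Or.inl rfl, fun v hv => ?_⟩
    choose c hc hc0 using fun s => exists_coeff hk v hv s
    rw [invariant hk hkn v hv c hc hc0 (k - 1) (by omega) s hs i hi, if_pos (by omega)]
    simp [laurent, add_assoc]
end
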